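/- Let T be the unilateral forward shift on the complex Hilbert space ℓ²(ℕ), i.e. the bounded linear operator with T(x₁, x₂, x₃, …) = (0, x₁, x₂, …). Then S_LY(T) = ∅; that is, λ·I + T is not Li-Yorke chaotic for any λ ∈ ℂ. -/

import Mathlib

open Filter

noncomputable section

/-- A bounded linear operator `T` is Li-Yorke chaotic if it admits an uncountable scrambled
set `Γ`: for every pair of distinct points `x, y ∈ Γ`,
`limsup ‖Tⁿx − Tⁿy‖ > 0` and `liminf ‖Tⁿx − Tⁿy‖ = 0`. -/
def LiYorkeChaotic {X : Type*} [NormedAddCommGroup X] [NormedSpace ℂ X]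
    (T : X →L[ℂ] X) : Prop :=
  ∃ Γ : Set X, ¬ Γ.Countable ∧ ∀ x ∈ Γ, ∀ y ∈ Γ, x ≠ y →
    0 < Filter.atTop.limsup (fun n => (‖(T ^ n) x - (T ^ n) y‖₊ : ENNReal)) ∧
    Filter.atTop.liminf (fun n => (‖(T ^ n) x - (T ^ n) y‖₊ : ENNReal)) = 0

/-- The Li-Yorke chaos translation set of `T`:
`S_LY(T) = {λ ∈ ℂ : λ·I + T is Li-Yorke chaotic}`. -/
def SLY {X : Type*} [NormedAddCommGroup X] [NormedSpace ℂ X]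
    (T : X →L[ℂ] X) : Set ℂ :=
  {z : ℂ | LiYorkeChaotic (z • (1 : X →L[ℂ] X) + T)}


lemma seq_dichotomy (a : ℕ → NNReal) (h : ∀ n, a (n+1) ^ 2 ≤ a n * a (n+2))
    (hsup : 0 < Filter.atTop.limsup (fun n => (a n : ENNReal)))
    (hinf : Filter.atTop.liminf (fun n => (a n : ENNReal)) = 0) : False := by
  by_cases hc : ∃ n, 0 < a n ∧ a n ≤ a (n+1)
  · obtain ⟨n, hn, hle⟩ := hc
    have key : ∀ k, a n ≤ a (n+k) ∧ a (n+k) ≤ a (n+k+1) := by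
      intro k
      induction k with
      | zero => exact ⟨le_rfl, hle⟩
      | succ k ih =>
        have h1 : a n ≤ a (n+k+1) := ih.1.trans ih.2
        refine ⟨h1, ?_⟩
        have hpos : 0 < a (n+k+1) := hn.trans_le h1
        have h2 : a (n+k+1) * a (n+k+1) ≤ a (n+k+1) * a (n+k+2) := by
          calc a (n+k+1) * a (n+k+1) = a (n+k+1) ^ 2 := by ring
            _ ≤ a (n+k) * a (n+k+2) := h (n+k)
            _ ≤ _ := mul_le_mul_left ih.2 _
        exact le_of_mul_le_mul_left h2 hpos
    have : (a n : ENNReal) ≤ Filter.atTop.liminf (fun n => (a n : ENNReal)) := by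
      refine Filter.le_liminf_of_le (by isBoundedDefault) ?_
      filter_upwards [Filter.eventually_ge_atTop n] with m hm
      obtain ⟨k, rfl⟩ := Nat.exists_eq_add_of_le hm
      exact_mod_cast (key k).1
    rw [hinf] at this
    have : a n ≤ 0 := by exact_mod_cast this
    exact absurd hn (not_lt.mpr this)
  · push Not at hc
    have hanti : Antitone (fun n => (a n : ENNReal)) := by
      refine antitone_nat_of_succ_le fun n => ?_
      have : a (n+1) ≤ a n := by
        rcases eq_or_lt_of_le (zero_le : 0 ≤ a n) with h0 | h0
        · have := h n
          rw [← h0, zero_mul] at this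
          have h3 : a (n+1) = 0 := by simpa using this
          rw [h3]; exact zero_le
        · exact (hc n h0).le
      exact_mod_cast this
    have ht := tendsto_atTop_iInf hanti
    rw [ht.limsup_eq, ← ht.liminf_eq, hinf] at hsup
    exact lt_irrefl _ hsup

lemma hypo_logconvex {H : Type*} [NormedAddCommGroup H] [InnerProductSpace ℂ H] [CompleteSpace H]
    (T : H →L[ℂ] H) (hT : ∀ x, ‖T x‖ = ‖x‖) (z : ℂ) (v : H) :
    ‖(z • (1 : H →L[ℂ] H) + T) v‖ ^ 2 ≤
      ‖v‖ * ‖(z • (1 : H →L[ℂ] H) + T) ((z • (1 : H →L[ℂ] H) + T) v)‖ := by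
  set A := z • (1 : H →L[ℂ] H) + T with hA
  have hn : ‖T‖ ≤ 1 := T.opNorm_le_bound zero_le_one fun x => by rw [hT, one_mul]
  have hyp : ∀ w, ‖ContinuousLinearMap.adjoint A w‖ ≤ ‖A w‖ := by
    intro w
    have e1 : A w = z • w + T w := by simp [hA]
    have e2 : ContinuousLinearMap.adjoint A w
        = (starRingEnd ℂ z) • w + ContinuousLinearMap.adjoint T w := by
      refine ext_inner_right ℂ fun u => ?_
      rw [ContinuousLinearMap.adjoint_inner_left, inner_add_left,
        ContinuousLinearMap.adjoint_inner_left]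
      simp [hA, inner_add_right, inner_smul_left, inner_smul_right]
    have hTs : ‖ContinuousLinearMap.adjoint T w‖ ≤ ‖T w‖ := by
      rw [hT]
      refine (ContinuousLinearMap.le_opNorm _ w).trans ?_
      rw [LinearIsometryEquiv.norm_map]
      exact mul_le_of_le_one_left (norm_nonneg _) hn
    have hsq : ‖ContinuousLinearMap.adjoint A w‖ ^ 2 ≤ ‖A w‖ ^ 2 := by
      rw [e1, e2, norm_add_sq (𝕜 := ℂ), norm_add_sq (𝕜 := ℂ), norm_smul, norm_smul,
        RCLike.norm_conj, inner_smul_left, inner_smul_left,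
        ContinuousLinearMap.adjoint_inner_right]
      have : RCLike.re ((starRingEnd ℂ) ((starRingEnd ℂ) z) * inner ℂ (T w) w)
          = RCLike.re ((starRingEnd ℂ) z * inner ℂ w (T w)) := by
        rw [← inner_conj_symm (T w) w, ← map_mul, RCLike.conj_re]
      rw [this]
      gcongr
    exact le_of_sq_le_sq hsq (norm_nonneg _)
  calc ‖A v‖ ^ 2 = RCLike.re (inner ℂ (A v) (A v)) := (inner_self_eq_norm_sq (𝕜 := ℂ) _).symm
    _ = RCLike.re (inner ℂ v (ContinuousLinearMap.adjoint A (A v))) := by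
        rw [ContinuousLinearMap.adjoint_inner_right]
    _ ≤ ‖v‖ * ‖ContinuousLinearMap.adjoint A (A v)‖ := re_inner_le_norm _ _
    _ ≤ _ := by gcongr; exact hyp _

lemma shift_isometry
    (T : lp (fun _ : ℕ => ℂ) 2 →L[ℂ] lp (fun _ : ℕ => ℂ) 2)
    (hT : ∀ x : lp (fun _ : ℕ => ℂ) 2,
      (T x : ℕ → ℂ) 0 = 0 ∧ ∀ n : ℕ, (T x : ℕ → ℂ) (n + 1) = (x : ℕ → ℂ) n)
    (x : lp (fun _ : ℕ => ℂ) 2) : ‖T x‖ = ‖x‖ := by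
  have h2 : (0:ℝ) < (2 : ENNReal).toReal := by norm_num
  rw [lp.norm_eq_tsum_rpow h2, lp.norm_eq_tsum_rpow h2]
  congr 1
  rw [((lp.memℓp (T x)).summable h2).tsum_eq_zero_add]
  simp only [(hT x).1, (hT x).2]
  simp

theorem SLY_shift_eq_empty
    (T : lp (fun _ : ℕ => ℂ) 2 →L[ℂ] lp (fun _ : ℕ => ℂ) 2)
    (hT : ∀ x : lp (fun _ : ℕ => ℂ) 2,
      (T x : ℕ → ℂ) 0 = 0 ∧ ∀ n : ℕ, (T x : ℕ → ℂ) (n + 1) = (x : ℕ → ℂ) n) :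
    SLY T = ∅ := by
  rw [Set.eq_empty_iff_forall_notMem]
  rintro z ⟨Γ, hΓ, h⟩
  have hnt : Γ.Nontrivial := by
    by_contra hs
    exact hΓ (Set.not_nontrivial_iff.mp hs).countable
  obtain ⟨x, hx, y, hy, hxy⟩ := hnt
  obtain ⟨h1, h2⟩ := h x hx y hy hxy
  refine seq_dichotomy _ (fun n => ?_) h1 h2
  have := hypo_logconvex T (shift_isometry T hT) z
    (((z • (1 : lp (fun _ : ℕ => ℂ) 2 →L[ℂ] lp (fun _ : ℕ => ℂ) 2) + T) ^ n) (x - y))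
  simp only [← map_sub]
  rw [pow_succ' _ (n+1), pow_succ' _ n]
  exact_mod_cast this
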